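/- In a nontrivial monoidal †-category, enriched in commutative monoids, with a simple tensor unit, a zero object, finite †-biproducts and †-equalizers of all parallel pairs, the scalars have characteristic 0: for every scalar a : I ⟶ I with a ≠ 0 and every natural number n ≥ 1, the n-fold sum n • a = a + ⋯ + a is nonzero. -/

import Mathlib

/-!
†-equalizers force the †-form to be anisotropic: if `v ≫ v† = 0`, then `v` factors as `t ≫ e`
through the †-kernel `e` of `v†`, and `t = t ≫ e ≫ e† = v ≫ e† = (e ≫ v†)† = 0`, so `v = 0`
(`eq_zero_of_comp_dag_eq_zero`). The diagonal `δ : I ⟶ Iⁿ` satisfies `δ ≫ δ† = n • 𝟙` and, for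
`n ≥ 1`, has a component equal to `𝟙 ≠ 0`; hence `n • 𝟙 ≠ 0` (`nsmul_id_ne_zero`). Finally, if
`n • a = a ≫ (n • 𝟙) = 0` with `a ≠ 0`, then the equalizer of `n • 𝟙` and `0` is a nonzero
subobject of `I`, so an isomorphism by simplicity, which gives `n • 𝟙 = 0`.
-/

open CategoryTheory CategoryTheory.Limits CategoryTheory.MonoidalCategory

universe v u

/-- A †-category structure: a contravariant, identity-on-objects, involutive
assignment of morphisms. -/
structure DaggerData (C : Type u) [Category.{v} C] where
  dag : ∀ {A B : C}, (A ⟶ B) → (B ⟶ A)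
  dag_id : ∀ A : C, dag (𝟙 A) = 𝟙 A
  dag_comp : ∀ {A B E : C} (f : A ⟶ B) (g : B ⟶ E), dag (f ≫ g) = dag g ≫ dag f
  dag_dag : ∀ {A B : C} (f : A ⟶ B), dag (dag f) = f

/-- Enrichment in commutative monoids: composition is bilinear and
zero morphisms are absorbing. -/
structure CMonEnriched (C : Type u) [Category.{v} C]
    [∀ X Y : C, AddCommMonoid (X ⟶ Y)] : Prop where
  comp_add : ∀ {X Y Z : C} (f : X ⟶ Y) (g h : Y ⟶ Z), f ≫ (g + h) = f ≫ g + f ≫ h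
  add_comp : ∀ {X Y Z : C} (f g : X ⟶ Y) (h : Y ⟶ Z), (f + g) ≫ h = f ≫ h + g ≫ h
  comp_zero : ∀ {X Y Z : C} (f : X ⟶ Y), f ≫ (0 : Y ⟶ Z) = 0
  zero_comp : ∀ {X Y Z : C} (f : Y ⟶ Z), (0 : X ⟶ Y) ≫ f = 0

/-- Existence of finite †-biproducts. -/
def HasFiniteDagBiproducts {C : Type u} [Category.{v} C]
    [∀ X Y : C, AddCommMonoid (X ⟶ Y)] (D : DaggerData C) : Prop :=
  ∀ (n : ℕ) (A : Fin n → C), ∃ (P : C) (i : ∀ k, A k ⟶ P),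
    (∀ k, i k ≫ D.dag (i k) = 𝟙 (A k)) ∧
    (∀ k j, k ≠ j → i k ≫ D.dag (i j) = 0) ∧
    ∑ k, D.dag (i k) ≫ i k = 𝟙 P

/-- Existence of †-equalizers of all parallel pairs: equalizers that are isometries. -/
def HasDagEqualizers {C : Type u} [Category.{v} C] (D : DaggerData C) : Prop :=
  ∀ {X Y : C} (u v : X ⟶ Y), ∃ (E : C) (e : E ⟶ X),
    e ≫ u = e ≫ v ∧ e ≫ D.dag e = 𝟙 E ∧
    ∀ {W : C} (w : W ⟶ X), w ≫ u = w ≫ v → ∃! t : W ⟶ E, t ≫ e = w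

section Helpers

variable {C : Type u} [Category.{v} C] [∀ X Y : C, AddCommMonoid (X ⟶ Y)]

lemma CMonEnriched.comp_sum (En : CMonEnriched C) {X Y Z : C} {ι : Type*} (s : Finset ι)
    (f : X ⟶ Y) (g : ι → (Y ⟶ Z)) : f ≫ (∑ k ∈ s, g k) = ∑ k ∈ s, f ≫ g k :=
  map_sum (⟨⟨fun g => f ≫ g, En.comp_zero f⟩, En.comp_add f⟩ : (Y ⟶ Z) →+ (X ⟶ Z)) g s

lemma CMonEnriched.sum_comp (En : CMonEnriched C) {X Y Z : C} {ι : Type*} (s : Finset ι)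
    (f : ι → (X ⟶ Y)) (g : Y ⟶ Z) : (∑ k ∈ s, f k) ≫ g = ∑ k ∈ s, f k ≫ g :=
  map_sum (⟨⟨fun f => f ≫ g, En.zero_comp g⟩, fun f f' => En.add_comp f f' g⟩ :
    (X ⟶ Y) →+ (X ⟶ Z)) f s

lemma CMonEnriched.comp_nsmul_id (En : CMonEnriched C) {X Y : C} (f : X ⟶ Y) (n : ℕ) :
    f ≫ (n • 𝟙 Y) = n • f := by
  have h := En.comp_sum (Finset.range n) f (fun _ => 𝟙 Y)
  simpa using h

/-- The dagger is not assumed additive; it preserves zero because zero morphisms are those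
factoring through the zero object. -/
lemma DaggerData.dag_zero [HasZeroObject C] (D : DaggerData C) (En : CMonEnriched C) (X Y : C) :
    D.dag (0 : X ⟶ Y) = 0 := by
  obtain ⟨Z, hZ⟩ := HasZeroObject.zero (C := C)
  have h1 : (0 : X ⟶ Y) = (0 : X ⟶ Z) ≫ (0 : Z ⟶ Y) := (En.comp_zero _).symm
  rw [h1, D.dag_comp, hZ.eq_of_src (D.dag (0 : X ⟶ Z)) 0, En.comp_zero]

/-- Anisotropy: `v ≫ v† = 0` implies `v = 0`. -/
lemma eq_zero_of_comp_dag_eq_zero [HasZeroObject C] (D : DaggerData C) (En : CMonEnriched C)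
    (heq : HasDagEqualizers D) {X Y : C} (v : X ⟶ Y) (hv : v ≫ D.dag v = 0) : v = 0 := by
  obtain ⟨E, e, he, hee, hu⟩ := heq (D.dag v) 0
  obtain ⟨t, ht, -⟩ := hu v (by rw [hv, En.comp_zero])
  have h1 : v ≫ D.dag e = 0 := by
    rw [En.comp_zero] at he
    rw [← D.dag_zero En, ← he, D.dag_comp, D.dag_dag]
  have h2 : t = 0 := by
    rw [← h1, ← ht, Category.assoc, hee, Category.comp_id]
  rw [← ht, h2, En.zero_comp]

lemma nsmul_id_ne_zero [HasZeroObject C] (D : DaggerData C) (En : CMonEnriched C)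
    (hbp : HasFiniteDagBiproducts D) (heq : HasDagEqualizers D) (X : C)
    (hX : (0 : X ⟶ X) ≠ 𝟙 X) (n : ℕ) (hn : 1 ≤ n) : n • 𝟙 X ≠ 0 := by
  intro h0
  obtain ⟨P, i, hii, hij, hsum⟩ := hbp n (fun _ => X)
  have hcomp : ∀ k, (∑ j, i j) ≫ D.dag (i k) = 𝟙 X := by
    intro k
    rw [En.sum_comp, Finset.sum_eq_single k (fun j _ hj => hij j k hj) (by simp), hii]
  -- Without additivity of the dagger, `δ†` for `δ = ∑ j, i j` is computed
  -- from its components `i k ≫ δ† = 𝟙`.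
  have hdag : D.dag (∑ j, i j) = ∑ k, D.dag (i k) := by
    rw [← Category.id_comp (D.dag (∑ j, i j)), ← hsum, En.sum_comp]
    refine Finset.sum_congr rfl fun k _ => ?_
    have hk : i k ≫ D.dag (∑ j, i j) = 𝟙 X := by
      have h := congrArg D.dag (hcomp k)
      rwa [D.dag_comp, D.dag_dag, D.dag_id] at h
    rw [Category.assoc, hk, Category.comp_id]
  have hδ : (∑ j, i j) = 0 := by
    refine eq_zero_of_comp_dag_eq_zero D En heq _ ?_
    rw [hdag, En.comp_sum, Finset.sum_congr rfl fun k _ => hcomp k]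
    simpa using h0
  have h1 := hcomp ⟨0, hn⟩
  rw [hδ, En.zero_comp] at h1
  exact hX h1

end Helpers

/-- In a nontrivial monoidal †-category, enriched in commutative monoids, with a
simple tensor unit, a zero object, finite †-biproducts and †-equalizers of all
parallel pairs, the scalars have characteristic 0: nonzero scalars have nonzero
n-fold sums for every n ≥ 1. -/
theorem stmt15 {C : Type u} [Category.{v} C] [MonoidalCategory C]
    [∀ X Y : C, AddCommMonoid (X ⟶ Y)] [HasZeroObject C]
    (D : DaggerData C) (En : CMonEnriched C)
    (hbp : HasFiniteDagBiproducts D) (heq : HasDagEqualizers D)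
    (hsimple : ∀ {X : C} (m : X ⟶ 𝟙_ C), Mono m → m = 0 ∨ IsIso m)
    (hnontriv : (0 : 𝟙_ C ⟶ 𝟙_ C) ≠ 𝟙 (𝟙_ C))
    (a : 𝟙_ C ⟶ 𝟙_ C) (ha : a ≠ 0) (n : ℕ) (hn : 1 ≤ n) :
    n • a ≠ 0 := by
  intro h
  obtain ⟨E, e, he, hee, hu⟩ := heq (n • 𝟙 (𝟙_ C)) 0
  rw [En.comp_zero] at he
  obtain ⟨t, ht, -⟩ := hu a (by rw [En.comp_nsmul_id, h, En.comp_zero])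
  have hmono : Mono e := by
    refine ⟨fun f g hfg => ?_⟩
    simpa [hee] using congrArg (· ≫ D.dag e) hfg
  rcases hsimple e hmono with h0 | hiso
  · exact ha (by rw [← ht, h0, En.comp_zero])
  · refine nsmul_id_ne_zero D En hbp heq _ hnontriv n hn ?_
    rw [← cancel_epi e, he, En.comp_zero]
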